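/- Let (G,X) be a flow such that X is 0-dimensional and G is compactly generated by Γ. Then the following are pairwise equivalent: (1) every point of X × X is Γ-recurrent of type I under the diagonal G-action g•(x,y) = (g•x, g•y) on X × X; (2) (G,X) is distal; (3) (G,X) is equicontinuous. -/

import Mathlib

open Pointwise Filter Topology Uniformity

/-- A directed (preordered, nonempty) index relation for nets. -/
def DirIdx {ι : Type} (le : ι → ι → Prop) : Prop :=
  Nonempty ι ∧ (∀ i, le i i) ∧ (∀ i j k, le i j → le j k → le i k) ∧
    ∀ i j, ∃ k, le i k ∧ le j k

/-- The limsup of a net of subsets of a topological space. -/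
def NetLimsup {ι α : Type} [TopologicalSpace α] (le : ι → ι → Prop) (Y : ι → Set α) :
    Set α :=
  {y | ∀ U ∈ 𝓝 y, ∀ i, ∃ j, le i j ∧ (U ∩ Y j).Nonempty}

/-- The Γ-length of a group element: the least `r ≥ 1` with `g ∈ Γ ^ r`. -/
noncomputable def len {G : Type} [Group G] (Γ : Set G) (g : G) : ℕ :=
  sInf {r : ℕ | 1 ≤ r ∧ g ∈ Γ ^ r}

/-- `K(g) = Γ^{|g|-1} · g`. -/
def Kset {G : Type} [Group G] (Γ : Set G) (g : G) : Set G :=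
  Γ ^ (len Γ g - 1) * {g}

/-- A Γ-cone. -/
def IsCone {G : Type} [Group G] [TopologicalSpace G] (Γ : Set G) (C : Set G) : Prop :=
  ∃ (ι : Type) (le : ι → ι → Prop) (g : ι → G),
    DirIdx le ∧
    (∀ i j, le i j → len Γ (g i) ≤ len Γ (g j)) ∧
    (∀ n : ℕ, ∃ i, ∀ j, le i j → n ≤ len Γ (g j)) ∧
    C = NetLimsup le fun i => Kset Γ (g i)

/-- Γ-recurrence of type I of a point of a `G`-space. -/
def RecurrentI {G α : Type} [Group G] [TopologicalSpace G] [TopologicalSpace α]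
    [MulAction G α] (Γ : Set G) (a : α) : Prop :=
  ∀ C : Set G, IsCone Γ C → ∀ U ∈ 𝓝 a, ∃ c ∈ C, c • a ∈ U

open MulAction TopologicalSpace

/-!
If the action is equicontinuous and `g` brings `x` and `y` close to a common point, then applying
`g⁻¹` keeps them close; so the orbit of a pair off the diagonal cannot accumulate at the diagonal.

If the flow is distal, then so is its square, and Ellis' idempotent argument makes every orbit
closure minimal. The return times of a point to a neighbourhood are then syndetic, whereas every
Γ-cone contains a translate of each power `Γ ^ r`; hence every cone contains a return time.

Suppose finally that all pairs are recurrent. The closure of a diagonal orbit has a compact clopen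
neighbourhood `W` inside any given entourage, and equicontinuity follows once the pairs whose orbits
stay in `W` form an open set. If they did not, pairs converging to such a pair would leave `W` for
the first time after longer and longer words. The exit positions accumulate at some `y ∉ W`, while
the words running back along these orbits generate a cone `C` with `C • y ⊆ W`, contradicting the
recurrence of `y`.
-/

section WordLength

variable {G : Type} [Group G] {Γ : Set G}

theorem inv_mem_pow_iff_of_inv_eq_self (hΓinv : Γ⁻¹ = Γ) {g : G} {n : ℕ} :
    g⁻¹ ∈ Γ ^ n ↔ g ∈ Γ ^ n := by
  rw [← Set.mem_inv, ← inv_pow, hΓinv]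

theorem len_le_of_mem_pow {g : G} {r : ℕ} (hr : 1 ≤ r) (hg : g ∈ Γ ^ r) : len Γ g ≤ r :=
  Nat.sInf_le (s := {r : ℕ | 1 ≤ r ∧ g ∈ Γ ^ r}) ⟨hr, hg⟩

theorem mem_pow_len (hΓgen : ∀ g : G, ∃ r : ℕ, 1 ≤ r ∧ g ∈ Γ ^ r) (g : G) : g ∈ Γ ^ len Γ g :=
  (Nat.sInf_mem (s := {r : ℕ | 1 ≤ r ∧ g ∈ Γ ^ r}) (hΓgen g)).2

theorem mem_pow_of_len_le (hΓ1 : (1 : G) ∈ Γ) (hΓgen : ∀ g : G, ∃ r : ℕ, 1 ≤ r ∧ g ∈ Γ ^ r)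
    {g : G} {n : ℕ} (h : len Γ g ≤ n) : g ∈ Γ ^ n :=
  Set.pow_subset_pow_right hΓ1 h (mem_pow_len hΓgen g)

theorem len_inv (hΓinv : Γ⁻¹ = Γ) (g : G) : len Γ g⁻¹ = len Γ g := by
  simp only [len, inv_mem_pow_iff_of_inv_eq_self hΓinv]

theorem mem_Kset_iff {g k : G} : k ∈ Kset Γ g ↔ k * g⁻¹ ∈ Γ ^ (len Γ g - 1) := by
  simp [Kset, Set.mul_singleton]

theorem exists_pow_mul_singleton_subset_Kset (hΓinv : Γ⁻¹ = Γ)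
    (hΓgen : ∀ g : G, ∃ r : ℕ, 1 ≤ r ∧ g ∈ Γ ^ r) {g : G} {r : ℕ} (hr : r < len Γ g) :
    ∃ h ∈ Γ ^ (r + 1), Γ ^ r * {h} ⊆ Kset Γ g := by
  obtain ⟨k, hk⟩ := Nat.exists_eq_add_of_le' (Nat.succ_le_of_lt hr)
  have hg := mem_pow_len hΓgen g
  rw [hk, pow_add] at hg
  obtain ⟨a, ha, h, hh, rfl⟩ := Set.mem_mul.mp hg
  refine ⟨h, hh, ?_⟩
  rintro _ ⟨f, hf, _, rfl, rfl⟩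
  have hfa : f * a⁻¹ ∈ Γ ^ r * Γ ^ k :=
    Set.mul_mem_mul hf ((inv_mem_pow_iff_of_inv_eq_self hΓinv).mpr ha)
  rw [mem_Kset_iff, hk, show k + (r + 1) - 1 = r + k by omega, pow_add]
  convert hfa using 1
  group

theorem isCompact_pow [TopologicalSpace G] [ContinuousMul G] (hΓc : IsCompact Γ) (n : ℕ) :
    IsCompact (Γ ^ n) := by
  induction n with
  | zero => rw [pow_zero]; exact isCompact_singleton
  | succ n ih => rw [pow_succ]; exact ih.mul hΓc

end WordLength

section Cones

theorem mem_netLimsup_of_mapClusterPt {ι α : Type} [Preorder ι] [IsDirectedOrder ι] [Nonempty ι]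
    [TopologicalSpace α] {Y : ι → Set α} {u : ι → α} {a : α} (ha : MapClusterPt a atTop u)
    (hu : ∀ᶠ i in atTop, u i ∈ Y i) : a ∈ NetLimsup (· ≤ ·) Y := by
  intro U hU i
  obtain ⟨j, hij, hjU, hjY⟩ := frequently_atTop.mp ((ha.frequently hU).and_eventually hu) i
  exact ⟨j, hij, u j, hjU, hjY⟩

variable {G : Type} [Group G] [TopologicalSpace G] {Γ C : Set G}

theorem IsCone.exists_pow_mul_singleton_subset [ContinuousMul G] (hΓc : IsCompact Γ)
    (hΓinv : Γ⁻¹ = Γ) (hΓgen : ∀ g : G, ∃ r : ℕ, 1 ≤ r ∧ g ∈ Γ ^ r) (hC : IsCone Γ C) (r : ℕ) :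
    ∃ h : G, Γ ^ r * {h} ⊆ C := by
  obtain ⟨ι, le, g, ⟨hne, hrefl, htrans, hdir⟩, -, htend, rfl⟩ := hC
  let : Preorder ι := { le := le, le_refl := hrefl, le_trans := htrans }
  have : IsDirectedOrder ι := ⟨hdir⟩
  obtain ⟨i₀, hi₀⟩ := htend (r + 1)
  have hthick : ∀ j, i₀ ≤ j → ∃ h ∈ Γ ^ (r + 1), Γ ^ r * {h} ⊆ Kset Γ (g j) :=
    fun j hj => exists_pow_mul_singleton_subset_Kset hΓinv hΓgen (hi₀ j hj)
  choose! h hmem hsub using hthick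
  obtain ⟨h₀, -, hh₀⟩ := (isCompact_pow hΓc (r + 1)).exists_mapClusterPt (u := h) (f := atTop)
    (tendsto_principal.mpr ((eventually_ge_atTop i₀).mono hmem))
  refine ⟨h₀, ?_⟩
  rw [Set.mul_singleton]
  rintro _ ⟨f, hf, rfl⟩
  have hfh₀ : MapClusterPt (f * h₀) atTop fun j => f * h j :=
    hh₀.continuousAt_comp (continuous_const_mul f).continuousAt
  exact mem_netLimsup_of_mapClusterPt hfh₀ ((eventually_ge_atTop i₀).mono fun j hj =>
    hsub j hj (Set.mul_mem_mul hf rfl))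

theorem exists_isCone_prod_singleton_subset_closure {Z : Type} [TopologicalSpace Z] {h : ℕ → G}
    (hmono : Monotone fun n => len Γ (h n)) (htend : Tendsto (fun n => len Γ (h n)) atTop atTop)
    {y : ℕ → Z} {y₀ : Z} (hy : MapClusterPt y₀ atTop y) :
    ∃ C, IsCone Γ C ∧ C ×ˢ {y₀} ⊆ closure (⋃ n, Kset Γ (h n) ×ˢ {y n}) := by
  have hfreq : ∀ V ∈ 𝓝 y₀, ∀ n, ∃ m ≥ n, y m ∈ V :=
    fun V hV => frequently_atTop.mp (hy.frequently hV)
  -- Indexes a subnet of `y` converging to `y₀`.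
  let ι : Type := {p : ℕ × (Set Z)ᵒᵈ // p.2.ofDual ∈ 𝓝 y₀ ∧ y p.1 ∈ p.2.ofDual}
  have hdir : DirIdx ((· ≤ ·) : ι → ι → Prop) := by
    refine ⟨⟨⟨(0, .toDual Set.univ), univ_mem, Set.mem_univ _⟩⟩, fun _ => le_rfl,
      fun _ _ _ => le_trans, ?_⟩
    rintro ⟨⟨n, V⟩, hV, -⟩ ⟨⟨n', V'⟩, hV', -⟩
    obtain ⟨m, hm, hmV⟩ := hfreq _ (inter_mem hV hV') (max n n')
    exact ⟨⟨(m, V ⊔ V'), inter_mem hV hV', hmV⟩,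
      ⟨(le_max_left _ _).trans hm, le_sup_left⟩, ⟨(le_max_right _ _).trans hm, le_sup_right⟩⟩
  refine ⟨NetLimsup (· ≤ ·) fun i : ι => Kset Γ (h i.1.1),
    ⟨ι, (· ≤ ·), fun i => h i.1.1, hdir, fun i j hij => hmono hij.1, fun n => ?_, rfl⟩, ?_⟩
  · obtain ⟨m, hm⟩ := eventually_atTop.mp (htend.eventually_ge_atTop n)
    exact ⟨⟨(m, .toDual Set.univ), univ_mem, Set.mem_univ _⟩, fun j hj => hm _ hj.1⟩
  · rw [Set.prod_singleton]
    rintro _ ⟨c, hc, rfl⟩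
    refine mem_closure_iff_nhds.mpr fun S hS => ?_
    obtain ⟨N, hN, V, hV, hNV⟩ := mem_nhds_prod_iff.mp hS
    obtain ⟨m, -, hm⟩ := hfreq V hV 0
    obtain ⟨i, hle, k, hkN, hkK⟩ := hc N hN ⟨(m, .toDual V), hV, hm⟩
    exact ⟨(k, y i.1.1), hNV ⟨hkN, hle.2 i.2.2⟩, Set.mem_iUnion.mpr ⟨i.1.1, hkK, rfl⟩⟩

end Cones

section FirstExit

variable {G Z : Type} [Group G] [MulAction G Z] {Γ : Set G} {W : Set Z} {z : Z} {g : G}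

/-- `g` is a first exit of `z` from `W`: it moves `z` out of `W`, and every element of smaller
Γ-length keeps `z` in `W`. -/
def IsFirstExit (Γ : Set G) (W : Set Z) (z : Z) (g : G) : Prop :=
  g • z ∉ W ∧ ∀ f : G, len Γ f < len Γ g → f • z ∈ W

theorem exists_isFirstExit (hz : ∃ g : G, g • z ∉ W) : ∃ g, IsFirstExit Γ W z g := by
  obtain ⟨g, hg, hmin⟩ := (measure (len Γ)).wf.has_min {g : G | g • z ∉ W} hz
  exact ⟨g, hg, fun f hf => not_not.mp fun hfW => hmin f hfW hf⟩

namespace IsFirstExit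

theorem lt_len (hΓ1 : (1 : G) ∈ Γ) (hΓgen : ∀ g : G, ∃ r : ℕ, 1 ≤ r ∧ g ∈ Γ ^ r)
    (hg : IsFirstExit Γ W z g) {n : ℕ} (hn : ∀ f ∈ Γ ^ n, f • z ∈ W) : n < len Γ g :=
  not_le.mp fun h => hg.1 (hn g (mem_pow_of_len_le hΓ1 hΓgen h))

theorem smul_mem_of_mem_pow (hg : IsFirstExit Γ W z g) (hlen : 1 < len Γ g) {f : G}
    (hf : f ∈ Γ ^ (len Γ g - 1)) : f • z ∈ W :=
  hg.2 f ((len_le_of_mem_pow (by omega) hf).trans_lt (by omega))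

theorem smul_mem_smul (hΓgen : ∀ g : G, ∃ r : ℕ, 1 ≤ r ∧ g ∈ Γ ^ r)
    (hg : IsFirstExit Γ W z g) (hlen : 1 < len Γ g) : g • z ∈ Γ • W := by
  have hmem : g ∈ Γ * Γ ^ (len Γ g - 1) := by
    rw [mul_pow_sub_one (by omega)]
    exact mem_pow_len hΓgen g
  obtain ⟨a, ha, b, hb, hab⟩ := Set.mem_mul.mp hmem
  rw [← hab, mul_smul]
  exact Set.smul_mem_smul ha (hg.smul_mem_of_mem_pow hlen hb)

theorem smul_smul_mem_of_mem_Kset_inv (hΓinv : Γ⁻¹ = Γ) (hg : IsFirstExit Γ W z g)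
    (hlen : 1 < len Γ g) {k : G} (hk : k ∈ Kset Γ g⁻¹) : k • g • z ∈ W := by
  rw [mem_Kset_iff, inv_inv, len_inv hΓinv] at hk
  rw [smul_smul]
  exact hg.smul_mem_of_mem_pow hlen hk

end IsFirstExit

variable [TopologicalSpace G] [ContinuousMul G] [TopologicalSpace Z] [ContinuousSMul G Z]

theorem exists_le_len_forall_Kset_smul_mem (hΓc : IsCompact Γ) (hΓ1 : (1 : G) ∈ Γ) (hΓinv : Γ⁻¹ = Γ)
    (hΓgen : ∀ g : G, ∃ r : ℕ, 1 ≤ r ∧ g ∈ Γ ^ r) (hW : IsOpen W) (hz : orbit G z ⊆ W)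
    (hnot : ¬ ∀ᶠ z' in 𝓝 z, orbit G z' ⊆ W) (n : ℕ) :
    ∃ (h : G) (y : Z), n ≤ len Γ h ∧ y ∈ Γ • W \ W ∧ ∀ k ∈ Kset Γ h, k • y ∈ W := by
  have hstay : ∀ᶠ z' in 𝓝 z, ∀ f ∈ Γ ^ (n + 1), f • z' ∈ W :=
    (isCompact_pow hΓc (n + 1)).eventually_forall_of_forall_eventually fun f _ =>
      (continuous_snd.smul continuous_fst).continuousAt.eventually_mem
        (hW.mem_nhds (hz (mem_orbit z f)))
  obtain ⟨z', hz', hstay'⟩ := ((not_eventually.mp hnot).and_eventually hstay).exists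
  obtain ⟨_, ⟨f, rfl⟩, hf⟩ := Set.not_subset.mp hz'
  obtain ⟨g, hg⟩ := exists_isFirstExit (Γ := Γ) ⟨f, hf⟩
  have hn : n + 1 < len Γ g := hg.lt_len hΓ1 hΓgen hstay'
  have hlen : 1 < len Γ g := by omega
  refine ⟨g⁻¹, g • z', ?_, ⟨hg.smul_mem_smul hΓgen hlen, hg.1⟩,
    fun k hk => hg.smul_smul_mem_of_mem_Kset_inv hΓinv hlen hk⟩
  rw [len_inv hΓinv]
  omega

theorem isOpen_setOf_orbit_subset_of_recurrentI (hΓc : IsCompact Γ) (hΓ1 : (1 : G) ∈ Γ)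
    (hΓinv : Γ⁻¹ = Γ) (hΓgen : ∀ g : G, ∃ r : ℕ, 1 ≤ r ∧ g ∈ Γ ^ r) (hW : IsClopen W)
    (hWc : IsCompact W) (hrec : ∀ z ∉ W, RecurrentI Γ z) : IsOpen {z : Z | orbit G z ⊆ W} := by
  refine isOpen_iff_eventually.mpr fun z hz => ?_
  by_contra hnot
  choose h y hlen hy hK using
    exists_le_len_forall_Kset_smul_mem hΓc hΓ1 hΓinv hΓgen hW.isOpen hz hnot
  obtain ⟨φ, -, hφlen⟩ := strictMono_subseq_of_id_le hlen
  obtain ⟨y₀, -, hy₀⟩ := (hΓc.smul_set hWc).exists_mapClusterPt (u := y ∘ φ) (f := atTop)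
    (tendsto_principal.mpr (.of_forall fun n => (hy (φ n)).1))
  have hy₀W : y₀ ∈ Wᶜ :=
    hW.compl.isClosed.mem_of_mapClusterPt hy₀ (.of_forall fun n => (hy (φ n)).2)
  obtain ⟨C, hC, hCsub⟩ :=
    exists_isCone_prod_singleton_subset_closure hφlen.monotone hφlen.tendsto_atTop hy₀
  have hsub : closure (⋃ n, Kset Γ (h (φ n)) ×ˢ {y (φ n)}) ⊆ {p : G × Z | p.1 • p.2 ∈ W} := by
    refine closure_minimal (Set.iUnion_subset fun n => ?_) (hW.isClosed.preimage continuous_smul)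
    rintro ⟨k, _⟩ ⟨hk, rfl⟩
    exact hK (φ n) k hk
  obtain ⟨c, hc, hcW⟩ := hrec y₀ hy₀W C hC Wᶜ (hW.compl.isOpen.mem_nhds hy₀W)
  exact hcW (hsub (hCsub (Set.mk_mem_prod hc (Set.mem_singleton y₀))))

end FirstExit

section ClopenNeighborhoods

theorem isTopologicalBasis_isClopen_prod {Y Z : Type*} [TopologicalSpace Y] [TopologicalSpace Z]
    (hY : IsTopologicalBasis {s : Set Y | IsClopen s})
    (hZ : IsTopologicalBasis {s : Set Z | IsClopen s}) :
    IsTopologicalBasis {s : Set (Y × Z) | IsClopen s} := by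
  refine (hY.prod hZ).of_isOpen_of_subset (fun s hs => hs.isOpen) ?_
  rintro _ ⟨s, hs, t, ht, rfl⟩
  exact hs.prod ht

theorem exists_isClopen_isCompact_between {Y : Type*} [TopologicalSpace Y] [LocallyCompactSpace Y]
    (hY : IsTopologicalBasis {s : Set Y | IsClopen s}) {K U : Set Y} (hK : IsCompact K)
    (hU : U ∈ 𝓝ˢ K) : ∃ W, IsClopen W ∧ IsCompact W ∧ K ⊆ W ∧ W ⊆ U := by
  rw [mem_nhdsSet_iff_forall] at hU
  refine hK.induction_on (p := fun s => ∃ W, IsClopen W ∧ IsCompact W ∧ s ⊆ W ∧ W ⊆ U)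
    ⟨∅, isClopen_empty, isCompact_empty, subset_rfl, Set.empty_subset U⟩ ?_ ?_ fun a ha => ?_
  · rintro s t hst ⟨W, hW, hWc, htW, hWU⟩
    exact ⟨W, hW, hWc, hst.trans htW, hWU⟩
  · rintro s t ⟨V, hV, hVc, hsV, hVU⟩ ⟨W, hW, hWc, htW, hWU⟩
    exact ⟨V ∪ W, hV.union hW, hVc.union hWc, Set.union_subset_union hsV htW,
      Set.union_subset hVU hWU⟩
  · obtain ⟨N, hN, hNU, hNc⟩ := local_compact_nhds (hU a ha)
    obtain ⟨V, hV, haV, hVN⟩ := hY.mem_nhds_iff.mp hN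
    exact ⟨V, nhdsWithin_le_nhds (hV.isOpen.mem_nhds haV), V, hV,
      hNc.of_isClosed_subset hV.isClosed hVN, subset_rfl, hVN.trans hNU⟩

end ClopenNeighborhoods

section Distality

variable {G X Y : Type*} [Group G]

/-- Distality of an action, stated contrapositively: two points whose orbit in the square
accumulates at the diagonal coincide. -/
def IsDistal (G X : Type*) [Group G] [TopologicalSpace X] [MulAction G X] : Prop :=
  ∀ ⦃x y z : X⦄, (z, z) ∈ closure (orbit G (x, y)) → x = y

theorem isDistal_iff_closure_inter_diagonal_eq_empty [TopologicalSpace X] [MulAction G X] :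
    IsDistal G X ↔ ∀ x y : X, x ≠ y →
      closure (Set.range fun g : G => (g • x, g • y)) ∩ Set.diagonal X = ∅ := by
  refine forall₂_congr fun x y => ?_
  rw [← not_imp_not (a := _ = ∅), not_ne_iff, ← ne_eq, ← Set.nonempty_iff_ne_empty]
  constructor
  · rintro h ⟨⟨z, z'⟩, hz, hdiag⟩
    obtain rfl : z = z' := hdiag
    exact h hz
  · exact fun h z hz => h ⟨(z, z), hz, rfl⟩

theorem equicontinuous_smul_iff [UniformSpace X] [MulAction G X] :
    (Equicontinuous fun (g : G) (x : X) => g • x) ↔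
      ∀ x : X, ∀ ε ∈ 𝓤 X, ∃ U ∈ 𝓝 x, ∀ y ∈ U, ∀ g : G, (g • y, g • x) ∈ ε := by
  refine forall_congr' fun x => ⟨fun h ε hε => ?_, fun h ε hε => ?_⟩
  · exact (h _ (symm_le_uniformity hε)).exists_mem
  · obtain ⟨U, hU, hUε⟩ := h _ (symm_le_uniformity hε)
    exact mem_of_superset hU hUε

theorem isDistal_of_equicontinuous [UniformSpace X] [T0Space X] [MulAction G X]
    (h : Equicontinuous fun (g : G) (x : X) => g • x) : IsDistal G X := by
  intro x y z hz
  refine eq_of_uniformity fun {ε} hε => ?_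
  obtain ⟨δ, hδ, hδsymm, hδε⟩ := comp_symm_mem_uniformity_sets hε
  have hU : {w | ∀ g : G, (g • z, g • w) ∈ δ} ∈ 𝓝 z := h z δ hδ
  obtain ⟨_, ⟨hx, hy⟩, g, rfl⟩ := mem_closure_iff_nhds.mp hz _ (prod_mem_nhds hU hU)
  have hx' := hx g⁻¹
  have hy' := hy g⁻¹
  simp only [Prod.smul_fst, Prod.smul_snd, inv_smul_smul] at hx' hy'
  exact hδε ⟨_, hδsymm.symm _ _ hx', hy'⟩

theorem IsDistal.prod [TopologicalSpace X] [MulAction G X] [TopologicalSpace Y] [MulAction G Y]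
    (hX : IsDistal G X) (hY : IsDistal G Y) : IsDistal G (X × Y) := by
  rintro ⟨x, y⟩ ⟨x', y'⟩ ⟨z, w⟩ h
  have hfst : (z, z) ∈ closure (orbit G (x, x')) := by
    refine map_mem_closure (f := Prod.map Prod.fst Prod.fst) (by fun_prop) h ?_
    rintro _ ⟨g, rfl⟩
    exact mem_orbit _ g
  have hsnd : (w, w) ∈ closure (orbit G (y, y')) := by
    refine map_mem_closure (f := Prod.map Prod.snd Prod.snd) (by fun_prop) h ?_
    rintro _ ⟨g, rfl⟩
    exact mem_orbit _ g
  exact Prod.ext (hX hfst) (hY hsnd)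

theorem isCompact_closure_orbit_prod [TopologicalSpace X] [R1Space X] [MulAction G X]
    [TopologicalSpace Y] [R1Space Y] [MulAction G Y]
    (hX : ∀ x : X, IsCompact (closure (orbit G x))) (hY : ∀ y : Y, IsCompact (closure (orbit G y)))
    (p : X × Y) : IsCompact (closure (orbit G p)) := by
  refine ((hX p.1).prod (hY p.2)).closure_of_subset ?_
  rintro _ ⟨g, rfl⟩
  exact ⟨subset_closure (mem_orbit p.1 g), subset_closure (mem_orbit p.2 g)⟩

end Distality

section Ellis

attribute [local instance] Ultrafilter.mul Ultrafilter.semigroup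

theorem exists_isIdempotentElem_ultrafilter_mul {M : Type*} [Semigroup M] (v : Ultrafilter M) :
    ∃ w : Ultrafilter M, IsIdempotentElem (w * v) := by
  obtain ⟨_, ⟨w, rfl⟩, hw⟩ := exists_idempotent_in_compact_subsemigroup
    (Ultrafilter.continuous_mul_left (M := M)) (Set.range fun w : Ultrafilter M => w * v)
    ⟨_, v, rfl⟩ (isCompact_range (Ultrafilter.continuous_mul_left v)) (by
      rintro _ ⟨a, rfl⟩ _ ⟨b, rfl⟩
      exact ⟨a * v * b, by simp only [mul_assoc]⟩)
  exact ⟨w, hw⟩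

variable {G X : Type*} [Group G] [TopologicalSpace X] [MulAction G X] {x y z : X}

theorem exists_tendsto_smul_ultrafilter (hx : IsCompact (closure (orbit G x)))
    (u : Ultrafilter G) : ∃ y, Tendsto (fun g : G => g • x) u (𝓝 y) := by
  have hu : ↑(u.map fun g : G => g • x) ≤ 𝓟 (closure (orbit G x)) :=
    tendsto_principal.mpr (.of_forall fun g => subset_closure (mem_orbit x g))
  obtain ⟨y, -, hy⟩ := hx.ultrafilter_le_nhds _ hu
  exact ⟨y, hy⟩

theorem mem_closure_orbit_iff_ultrafilter :
    y ∈ closure (orbit G x) ↔ ∃ u : Ultrafilter G, Tendsto (fun g : G => g • x) u (𝓝 y) := by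
  have h : y ∈ closure (orbit G x) ↔ MapClusterPt y ⊤ fun g : G => g • x := by
    rw [MapClusterPt, map_top, ← mem_closure_iff_clusterPt, orbit]
  simp only [h, mapClusterPt_iff_ultrafilter, le_top, true_and]

theorem tendsto_smul_ultrafilter_mul [RegularSpace X] [ContinuousConstSMul G X]
    {u v : Ultrafilter G} (hv : Tendsto (fun g : G => g • x) v (𝓝 y))
    (hu : Tendsto (fun g : G => g • y) u (𝓝 z)) :
    Tendsto (fun g : G => g • x) ↑(u * v) (𝓝 z) := by
  refine (closed_nhds_basis z).tendsto_right_iff.mpr fun A ⟨hA, _⟩ => ?_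
  rw [Ultrafilter.eventually_mul]
  filter_upwards [hu.eventually (interior_mem_nhds.mpr hA)] with f hf
  have hfv : Tendsto (fun g : G => f • g • x) v (𝓝 (f • y)) := hv.const_smul f
  filter_upwards [hfv.eventually (isOpen_interior.mem_nhds hf)] with g hg
  rw [mul_smul]
  exact interior_subset hg

variable [T3Space X] [ContinuousConstSMul G X]

theorem IsDistal.tendsto_smul_of_isIdempotentElem (hX : IsDistal G X)
    (hLag : ∀ x : X, IsCompact (closure (orbit G x))) {e : Ultrafilter G}
    (he : IsIdempotentElem e) (x : X) :
    Tendsto (fun g : G => g • x) e (𝓝 x) := by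
  obtain ⟨y, hxy⟩ := exists_tendsto_smul_ultrafilter (hLag x) e
  obtain ⟨z, hyz⟩ := exists_tendsto_smul_ultrafilter (hLag y) e
  have hxz := tendsto_smul_ultrafilter_mul hxy hyz
  rw [he.eq] at hxz
  obtain rfl : y = z := tendsto_nhds_unique hxy hxz
  have hmem : (y, y) ∈ closure (orbit G (x, y)) :=
    mem_closure_orbit_iff_ultrafilter.mpr ⟨e, hxy.prodMk_nhds hyz⟩
  obtain rfl : x = y := hX hmem
  exact hxy

theorem IsDistal.mem_closure_orbit_symm (hX : IsDistal G X)
    (hLag : ∀ x : X, IsCompact (closure (orbit G x))) (hy : y ∈ closure (orbit G x)) :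
    x ∈ closure (orbit G y) := by
  obtain ⟨v, hv⟩ := mem_closure_orbit_iff_ultrafilter.mp hy
  obtain ⟨w, hw⟩ := exists_isIdempotentElem_ultrafilter_mul v
  obtain ⟨z, hz⟩ := exists_tendsto_smul_ultrafilter (hLag y) w
  obtain rfl : x = z := tendsto_nhds_unique (hX.tendsto_smul_of_isIdempotentElem hLag hw x)
    (tendsto_smul_ultrafilter_mul hv hz)
  exact mem_closure_orbit_iff_ultrafilter.mpr ⟨w, hz⟩

end Ellis

section Recurrence

theorem exists_finset_forall_exists_smul_mem {G Z : Type*} [Group G] [TopologicalSpace Z]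
    [MulAction G Z] [ContinuousConstSMul G Z] {K U : Set Z} (hK : IsCompact K) (hU : IsOpen U)
    (h : ∀ q ∈ K, (orbit G q ∩ U).Nonempty) : ∃ t : Finset G, ∀ q ∈ K, ∃ f ∈ t, f • q ∈ U := by
  have hcover : K ⊆ ⋃ f : G, (fun q : Z => f • q) ⁻¹' U := by
    intro q hq
    obtain ⟨_, ⟨f, rfl⟩, hf⟩ := h q hq
    exact Set.mem_iUnion.mpr ⟨f, hf⟩
  obtain ⟨t, ht⟩ :=
    hK.elim_finite_subcover _ (fun f => hU.preimage (continuous_const_smul f)) hcover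
  exact ⟨t, fun q hq => by simpa using ht hq⟩

theorem recurrentI_of_isDistal {G Z : Type} [Group G] [TopologicalSpace G] [ContinuousMul G]
    [TopologicalSpace Z] [T3Space Z] [MulAction G Z] [ContinuousConstSMul G Z]
    (hLag : ∀ z : Z, IsCompact (closure (orbit G z))) {Γ : Set G} (hΓc : IsCompact Γ)
    (hΓ1 : (1 : G) ∈ Γ) (hΓinv : Γ⁻¹ = Γ) (hΓgen : ∀ g : G, ∃ r : ℕ, 1 ≤ r ∧ g ∈ Γ ^ r)
    (hZ : IsDistal G Z) (z : Z) : RecurrentI Γ z := by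
  intro C hC U hU
  have hreturn : ∀ q ∈ closure (orbit G z), (orbit G q ∩ interior U).Nonempty := fun q hq =>
    Set.inter_comm (interior U) _ ▸ mem_closure_iff_nhds.mp (hZ.mem_closure_orbit_symm hLag hq) _
      (interior_mem_nhds.mpr hU)
  obtain ⟨t, ht⟩ := exists_finset_forall_exists_smul_mem (hLag z) isOpen_interior hreturn
  obtain ⟨h, hh⟩ := hC.exists_pow_mul_singleton_subset hΓc hΓinv hΓgen (t.sup (len Γ))
  obtain ⟨f, hft, hfU⟩ := ht (h • z) (subset_closure (mem_orbit z h))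
  have hf : f ∈ Γ ^ t.sup (len Γ) := mem_pow_of_len_le hΓ1 hΓgen (Finset.le_sup hft)
  refine ⟨f * h, hh (Set.mul_mem_mul hf rfl), ?_⟩
  rw [mul_smul]
  exact interior_subset hfU

theorem equicontinuous_of_recurrentI {G X : Type} [Group G] [TopologicalSpace G] [ContinuousMul G]
    [UniformSpace X] [T2Space X] [LocallyCompactSpace X] [MulAction G X] [ContinuousSMul G X]
    (hLag : ∀ x : X, IsCompact (closure (orbit G x))) {Γ : Set G} (hΓc : IsCompact Γ)
    (hΓ1 : (1 : G) ∈ Γ) (hΓinv : Γ⁻¹ = Γ) (hΓgen : ∀ g : G, ∃ r : ℕ, 1 ≤ r ∧ g ∈ Γ ^ r)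
    (hX : IsTopologicalBasis {s : Set X | IsClopen s}) (hrec : ∀ p : X × X, RecurrentI Γ p) :
    Equicontinuous fun (g : G) (x : X) => g • x := by
  intro x ε hε
  have hdiag : closure (orbit G (x, x)) ⊆ Set.diagonal X := by
    refine closure_minimal ?_ isClosed_diagonal
    rintro _ ⟨g, rfl⟩
    exact rfl
  obtain ⟨W, hW, hWc, hsub, hWε⟩ := exists_isClopen_isCompact_between
    (isTopologicalBasis_isClopen_prod hX hX) (isCompact_closure_orbit_prod hLag hLag (x, x))
    (nhdsSet_mono hdiag (nhdsSet_diagonal_le_uniformity hε))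
  have hopen : IsOpen {p : X × X | orbit G p ⊆ W} :=
    isOpen_setOf_orbit_subset_of_recurrentI hΓc hΓ1 hΓinv hΓgen hW hWc fun p _ => hrec p
  have hcont : ContinuousAt (fun y : X => (x, y)) x := by fun_prop
  filter_upwards [hcont.eventually_mem (hopen.mem_nhds (subset_closure.trans hsub))] with y hy g
  exact hWε (hy (mem_orbit (x, y) g))

end Recurrence

theorem statement4_general {G X : Type} [Group G] [TopologicalSpace G] [ContinuousMul G]
    [UniformSpace X] [T2Space X] [LocallyCompactSpace X] [MulAction G X] [ContinuousSMul G X]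
    (hLag : ∀ x : X, IsCompact (closure (orbit G x))) {Γ : Set G} (hΓc : IsCompact Γ)
    (hΓ1 : (1 : G) ∈ Γ) (hΓinv : Γ⁻¹ = Γ) (hΓgen : ∀ g : G, ∃ r : ℕ, 1 ≤ r ∧ g ∈ Γ ^ r)
    (hX : IsTopologicalBasis {s : Set X | IsClopen s}) :
    List.TFAE [∀ p : X × X, RecurrentI Γ p, IsDistal G X,
      Equicontinuous fun (g : G) (x : X) => g • x] := by
  tfae_have 1 → 3 := equicontinuous_of_recurrentI hLag hΓc hΓ1 hΓinv hΓgen hX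
  tfae_have 3 → 2 := isDistal_of_equicontinuous
  have hLagProd : ∀ p : X × X, IsCompact (closure (orbit G p)) :=
    isCompact_closure_orbit_prod hLag hLag
  tfae_have 2 → 1 := fun h => recurrentI_of_isDistal hLagProd hΓc hΓ1 hΓinv hΓgen (h.prod h)
  tfae_finish

/-- for a flow on a 0-dimensional space with compactly generated phase
group, pointwise product Γ-recurrence of type I, distality, and equicontinuity are
pairwise equivalent. -/
theorem statement4 {G X : Type} [Group G] [TopologicalSpace G] [T2Space G]
    [ContinuousMul G] [UniformSpace X] [T2Space X] [LocallyCompactSpace X]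
    [MulAction G X] [ContinuousSMul G X]
    (hLag : ∀ x : X, IsCompact (closure (MulAction.orbit G x)))
    (Γ : Set G) (hΓc : IsCompact Γ) (hΓ1 : (1 : G) ∈ Γ) (hΓinv : Γ⁻¹ = Γ)
    (hΓgen : ∀ g : G, ∃ r : ℕ, 1 ≤ r ∧ g ∈ Γ ^ r)
    (h0dim : ∀ x : X, ∀ U ∈ 𝓝 x, ∃ V : Set X, IsClopen V ∧ x ∈ V ∧ V ⊆ U) :
    List.TFAE
      [ (∀ p : X × X, RecurrentI Γ p),
        (∀ x y : X, x ≠ y →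
          closure (Set.range fun g : G => (g • x, g • y)) ∩ Set.diagonal X = ∅),
        (∀ x : X, ∀ ε ∈ 𝓤 X, ∃ U ∈ 𝓝 x, ∀ y ∈ U, ∀ g : G, (g • y, g • x) ∈ ε) ] := by
  have hX : IsTopologicalBasis {s : Set X | IsClopen s} :=
    isTopologicalBasis_of_isOpen_of_nhds (fun _ hV => hV.isOpen) fun x U hxU hU =>
      h0dim x U (hU.mem_nhds hxU)
  rw [← isDistal_iff_closure_inter_diagonal_eq_empty, ← equicontinuous_smul_iff]
  exact statement4_general hLag hΓc hΓ1 hΓinv hΓgen hX
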